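/- Yukawa fundamental solution: let κ ∈ ℂ with Re κ > 0 and let f : ℝ³ → ℂ be a Schwartz function. Then the convolution u(x) = ∫_{ℝ³} (e^{−κ|x−y|}/(4π|x−y|)) f(y) dy is well defined, u is twice continuously differentiable, and u satisfies −Δu(x) + κ²u(x) = f(x) for all x ∈ ℝ³. -/

import Mathlib

open MeasureTheory Complex Filter
open scoped Topology Real

noncomputable section

/-- Euclidean space `ℝ³`. -/
abbrev E3 := EuclideanSpace ℝ (Fin 3)

/-- The `i`-th standard basis vector of `ℝ³`. -/
def e3 (i : Fin 3) : E3 := EuclideanSpace.single i 1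

/-- The Laplacian `Δu(x) = Σᵢ ∂ᵢ∂ᵢ u(x)` of a function `u : ℝ³ → ℂ`. -/
def lapC (u : E3 → ℂ) (x : E3) : ℂ :=
  ∑ i, fderiv ℝ (fun y => fderiv ℝ u y (e3 i)) x (e3 i)

/-- The Yukawa potential `u(x) = ∫ e^{−κ|x−y|}/(4π|x−y|) f(y) dy`. -/
def yukawa (κ : ℂ) (f : E3 → ℂ) (x : E3) : ℂ :=
  ∫ y : E3, Complex.exp (-κ * (‖x - y‖ : ℝ)) / (4 * (π : ℂ) * (‖x - y‖ : ℝ)) * f y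

/-!
Write `K(x) = e^{-κ|x|}/(4π|x|)`, so that the potential is `K ⋆ f`. As `K` is integrable, all
derivatives of `K ⋆ f` may be moved onto `f`, and the equation becomes
`∫ K (κ² φ - Δφ) = φ(0)` for `φ(w) = f(x - w)`. Integrating by parts once moves one derivative to
`K`; since `∇K` is radial, only the radial derivative of `φ` survives. The profile satisfies
`(r² K')' = κ² r² K`, so the integrand is `r⁻²` times the radial derivative of `r² K' φ`, and in
polar coordinates the integral is the boundary term at the origin. There `r² K' → -1/(4π)`, and
`4π` is the area of the unit sphere.
-/

open scoped Convolution

section ContDiffBdd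

variable {E F G : Type*} [NormedAddCommGroup E] [NormedSpace ℝ E] [NormedAddCommGroup F]
  [NormedSpace ℝ F] [NormedAddCommGroup G] [NormedSpace ℝ G] {n : ℕ} {f : E → F}

theorem fderiv_comp_const_sub (hf : Differentiable ℝ f) (x w : E) :
    fderiv ℝ (fun w => f (x - w)) w = -fderiv ℝ f (x - w) := by
  have hcomp := (hf (x - w)).hasFDerivAt.comp w ((hasFDerivAt_id w).const_sub x)
  rw [ContinuousLinearMap.comp_neg, ContinuousLinearMap.comp_id] at hcomp
  exact hcomp.fderiv

/-- The class `C_b^n` of `n` times continuously differentiable functions which are bounded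
together with all their derivatives of order at most `n`. -/
structure ContDiffBdd (n : ℕ) (f : E → F) : Prop where
  contDiff : ContDiff ℝ n f
  bdd : ∀ k ≤ n, ∃ C, ∀ x, ‖iteratedFDeriv ℝ k f x‖ ≤ C

namespace ContDiffBdd

theorem differentiable (hf : ContDiffBdd (n + 1) f) : Differentiable ℝ f :=
  hf.contDiff.differentiable (by simp)

theorem of_le {m : ℕ} (hf : ContDiffBdd n f) (hmn : m ≤ n) : ContDiffBdd m f :=
  ⟨hf.contDiff.of_le (by exact_mod_cast hmn), fun k hk => hf.bdd k (hk.trans hmn)⟩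

theorem exists_norm_le (hf : ContDiffBdd n f) : ∃ C, ∀ x, ‖f x‖ ≤ C := by
  simpa only [norm_iteratedFDeriv_zero] using hf.bdd 0 n.zero_le

protected theorem fderiv (hf : ContDiffBdd (n + 1) f) : ContDiffBdd n (fderiv ℝ f) where
  contDiff := hf.contDiff.fderiv_right (by norm_cast)
  bdd k hk := by
    simpa only [norm_iteratedFDeriv_fderiv] using hf.bdd (k + 1) (Nat.succ_le_succ hk)

theorem clm_comp (L : F →L[ℝ] G) (hf : ContDiffBdd n f) : ContDiffBdd n (L ∘ f) where
  contDiff := L.contDiff.comp hf.contDiff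
  bdd k hk := by
    obtain ⟨C, hC⟩ := hf.bdd k hk
    refine ⟨‖L‖ * C, fun x => ?_⟩
    exact (L.norm_iteratedFDeriv_comp_left hf.contDiff.contDiffAt (by exact_mod_cast hk)).trans
      (by gcongr; exact hC x)

theorem fderiv_apply (hf : ContDiffBdd (n + 1) f) (v : E) :
    ContDiffBdd n fun x => fderiv ℝ f x v :=
  hf.fderiv.clm_comp (ContinuousLinearMap.apply ℝ F v)

theorem comp_const_sub (hf : ContDiffBdd n f) (x : E) : ContDiffBdd n fun w => f (x - w) where
  contDiff := hf.contDiff.comp (contDiff_const.sub contDiff_id)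
  bdd k hk := by
    obtain ⟨C, hC⟩ := hf.bdd k hk
    refine ⟨C, fun w => ?_⟩
    have hcomp : (fun w => f (x - w)) = (fun z => f (x + z)) ∘ LinearIsometryEquiv.neg ℝ := by
      ext w
      simp [sub_eq_add_neg]
    rw [hcomp, LinearIsometryEquiv.norm_iteratedFDeriv_comp_right, iteratedFDeriv_comp_add_left]
    exact hC _

end ContDiffBdd

theorem contDiffBdd_schwartzMap (f : SchwartzMap E F) (n : ℕ) : ContDiffBdd n f where
  contDiff := f.smooth n
  bdd k _ := by
    obtain ⟨C, -, hC⟩ := f.decay 0 k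
    exact ⟨C, by simpa only [pow_zero, one_mul] using hC⟩

end ContDiffBdd

section Convolution

variable {E F G W : Type*} [NormedAddCommGroup E] [NormedSpace ℝ E] [MeasurableSpace E]
  [BorelSpace E] [SecondCountableTopology E] [NormedAddCommGroup F] [NormedSpace ℝ F]
  [NormedAddCommGroup G] [NormedSpace ℝ G] [NormedAddCommGroup W] [NormedSpace ℝ W]
  {μ : Measure E} {n : ℕ} {K : E → F} {g : E → G}

theorem integrable_bilinear_of_contDiffBdd (L : F →L[ℝ] G →L[ℝ] W) (hK : Integrable K μ)
    (hg : ContDiffBdd n g) : Integrable (fun w => L (K w) (g w)) μ := by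
  obtain ⟨C, hC⟩ := hg.exists_norm_le
  refine (hK.norm.const_mul ‖L‖ |>.mul_const C).mono' ?_ (.of_forall fun w => ?_)
  · exact L.aestronglyMeasurable_comp₂ hK.aestronglyMeasurable
      hg.contDiff.continuous.aestronglyMeasurable
  · exact L.le_of_opNorm₂_le_of_le le_rfl le_rfl (hC w)

theorem ContDiffBdd.convolutionExists (L : F →L[ℝ] G →L[ℝ] W) (hK : Integrable K μ)
    (hg : ContDiffBdd n g) : ConvolutionExists K g L μ :=
  fun x => integrable_bilinear_of_contDiffBdd L hK (hg.comp_const_sub x)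

set_option maxSynthPendingDepth 3 in
theorem ContDiffBdd.hasFDerivAt_convolution (L : F →L[ℝ] G →L[ℝ] W) (hK : Integrable K μ)
    (hg : ContDiffBdd 1 g) (x : E) :
    HasFDerivAt (K ⋆[L, μ] g) ((K ⋆[L.precompR E, μ] fderiv ℝ g) x) x := by
  obtain ⟨C, hC⟩ := hg.fderiv.exists_norm_le
  have hbound (y w : E) :
      ‖L.precompR E (K w) (fderiv ℝ g (y - w))‖ ≤ ‖L.precompR E‖ * ‖K w‖ * C :=
    (L.precompR E).le_of_opNorm₂_le_of_le le_rfl le_rfl (hC (y - w))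
  have hderiv (y w : E) :
      HasFDerivAt (fun y => L (K w) (g (y - w))) (L.precompR E (K w) (fderiv ℝ g (y - w))) y :=
    (L (K w)).hasFDerivAt.comp y
      ((hasFDerivAt_comp_sub w).2 (hg.differentiable (y - w)).hasFDerivAt)
  exact hasFDerivAt_integral_of_dominated_of_fderiv_le univ_mem
    (.of_forall fun y => (hg.convolutionExists L hK y).aestronglyMeasurable)
    (hg.convolutionExists L hK x)
    (hg.fderiv.convolutionExists (L.precompR E) hK x).aestronglyMeasurable
    (.of_forall fun w y _ => hbound y w) ((hK.norm.const_mul _).mul_const C)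
    (.of_forall fun w y _ => hderiv y w)

set_option maxSynthPendingDepth 3 in
theorem ContDiffBdd.fderiv_convolution_apply (L : F →L[ℝ] G →L[ℝ] W) (hK : Integrable K μ)
    (hg : ContDiffBdd 1 g) (x v : E) :
    fderiv ℝ (K ⋆[L, μ] g) x v = (K ⋆[L, μ] fun y => fderiv ℝ g y v) x := by
  rw [(hg.hasFDerivAt_convolution L hK x).fderiv, convolution_def,
    ContinuousLinearMap.integral_apply (hg.fderiv.convolutionExists (L.precompR E) hK x)]
  rfl

theorem ContDiffBdd.contDiff_convolution [FiniteDimensional ℝ E] (L : F →L[ℝ] G →L[ℝ] W)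
    (hK : Integrable K μ) (hg : ContDiffBdd n g) : ContDiff ℝ n (K ⋆[L, μ] g) := by
  induction n generalizing g with
  | zero =>
    obtain ⟨C, hC⟩ := hg.exists_norm_le
    have hbdd : BddAbove (Set.range fun x => ‖g x‖) := ⟨C, Set.forall_mem_range.2 hC⟩
    exact contDiff_zero.2 (hbdd.continuous_convolution_right_of_integrable L hK
      hg.contDiff.continuous)
  | succ n ih =>
    have hg1 : ContDiffBdd 1 g := hg.of_le (by simp)
    push_cast
    rw [contDiff_succ_iff_fderiv_apply]
    refine ⟨fun x => (hg1.hasFDerivAt_convolution L hK x).differentiableAt, by simp, fun v => ?_⟩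
    simp_rw [hg1.fderiv_convolution_apply L hK]
    exact ih (hg.fderiv_apply v)

end Convolution

section PolarCoordinates

open Module Set Metric

variable {E V : Type*} [NormedAddCommGroup E] [NormedSpace ℝ E] [FiniteDimensional ℝ E]
  [MeasurableSpace E] [BorelSpace E] {μ : Measure E} [μ.IsAddHaarMeasure]
  [NormedAddCommGroup V] {f : E → V}

theorem integrable_polar (hf : Integrable f μ) :
    Integrable (fun p : sphere (0 : E) 1 × Ioi (0 : ℝ) => f (p.2.1 • p.1.1))
      (μ.toSphere.prod (.volumeIoiPow (finrank ℝ E - 1))) := by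
  rw [← μ.measurePreserving_homeomorphUnitSphereProd.integrable_comp_emb
    (Homeomorph.measurableEmbedding _)]
  have hf' : IntegrableOn f {0}ᶜ μ := hf.integrableOn
  rw [integrableOn_iff_comap_subtypeVal (measurableSet_singleton 0).compl] at hf'
  refine hf'.congr (.of_forall fun x => ?_)
  simp [smul_inv_smul₀ (norm_ne_zero_iff.2 x.2)]

variable [NormedSpace ℝ V]

theorem integral_volumeIoiPow (n : ℕ) (f : ℝ → V) :
    ∫ r, f r ∂Measure.volumeIoiPow n = ∫ r in Ioi (0 : ℝ), r ^ n • f r := by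
  simp only [Measure.volumeIoiPow, ENNReal.ofReal]
  rw [integral_withDensity_eq_integral_smul (by fun_prop),
    integral_subtype_comap measurableSet_Ioi fun r => Real.toNNReal (r ^ n) • f r]
  refine setIntegral_congr_fun measurableSet_Ioi fun r hr => ?_
  simp only [NNReal.smul_def, Real.coe_toNNReal _ (pow_nonneg hr.out.le n)]

theorem integrable_volumeIoiPow_iff {n : ℕ} {f : ℝ → V} :
    Integrable (fun r : Ioi (0 : ℝ) => f r) (Measure.volumeIoiPow n) ↔
      IntegrableOn (fun r => r ^ n • f r) (Ioi 0) := by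
  simp only [Measure.volumeIoiPow, ENNReal.ofReal]
  rw [integrable_withDensity_iff_integrable_smul (by fun_prop),
    integrableOn_iff_comap_subtypeVal measurableSet_Ioi]
  refine integrable_congr (.of_forall fun r => ?_)
  simp only [NNReal.smul_def, Real.coe_toNNReal _ (pow_nonneg r.2.out.le n), Function.comp_apply]

theorem integrableOn_Ioi_polar_ae (hf : Integrable f μ) :
    ∀ᵐ ω : sphere (0 : E) 1 ∂μ.toSphere,
      IntegrableOn (fun r : ℝ => r ^ (finrank ℝ E - 1) • f (r • ω.1)) (Ioi 0) := by
  filter_upwards [(integrable_polar hf).prod_right_ae] with ω hω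
  exact integrable_volumeIoiPow_iff (f := fun r => f (r • ω.1)) |>.1 hω

theorem integral_eq_integral_toSphere_integral_Ioi [Nontrivial E] (hf : Integrable f μ) :
    ∫ x, f x ∂μ =
      ∫ ω, (∫ r in Ioi (0 : ℝ), r ^ (finrank ℝ E - 1) • f (r • ω.1)) ∂μ.toSphere := by
  calc ∫ x, f x ∂μ = ∫ x : ({0}ᶜ : Set E), f x ∂(μ.comap (↑)) := by
        rw [integral_subtype_comap (measurableSet_singleton _).compl, restrict_compl_singleton]
    _ = ∫ p, f (p.2.1 • p.1.1) ∂μ.toSphere.prod (.volumeIoiPow (finrank ℝ E - 1)) := by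
        rw [← μ.measurePreserving_homeomorphUnitSphereProd.integral_comp
          (Homeomorph.measurableEmbedding _)]
        refine integral_congr_ae (.of_forall fun x => ?_)
        simp [smul_inv_smul₀ (norm_ne_zero_iff.2 x.2)]
    _ = _ := by
        rw [integral_prod _ (integrable_polar hf)]
        exact integral_congr_ae (.of_forall fun ω =>
          integral_volumeIoiPow _ fun r => f (r • ω.1))

theorem integral_inv_norm_pow_smul_radial_deriv [Nontrivial E] [CompleteSpace V] {f' : E → V}
    (hcont : ContinuousAt f 0)
    (hderiv : ∀ ω ∈ sphere (0 : E) 1, ∀ r > 0,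
      HasDerivAt (fun r : ℝ => f (r • ω)) (f' (r • ω)) r)
    (hint : Integrable (fun x => (‖x‖ ^ (finrank ℝ E - 1))⁻¹ • f' x) μ)
    (hlim : ∀ ω ∈ sphere (0 : E) 1, Tendsto (fun r : ℝ => f (r • ω)) atTop (𝓝 0)) :
    ∫ x, (‖x‖ ^ (finrank ℝ E - 1))⁻¹ • f' x ∂μ = -(μ.toSphere.real univ • f 0) := by
  have hcancel : ∀ ω : sphere (0 : E) 1, ∀ r ∈ Ioi (0 : ℝ),
      r ^ (finrank ℝ E - 1) • (‖r • ω.1‖ ^ (finrank ℝ E - 1))⁻¹ • f' (r • ω.1) =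
        f' (r • ω.1) := fun ω r hr => by
    rw [norm_smul, norm_eq_of_mem_sphere ω, mul_one, Real.norm_of_nonneg hr.out.le,
      smul_inv_smul₀ (pow_ne_zero _ hr.out.ne')]
  have hray : ∀ᵐ ω ∂μ.toSphere, ∫ r in Ioi (0 : ℝ), f' (r • ω.1) = -f 0 := by
    filter_upwards [integrableOn_Ioi_polar_ae hint] with ω hω
    have hcont₀ : ContinuousAt (fun r : ℝ => f (r • ω.1)) 0 :=
      ContinuousAt.comp (by simpa using hcont) (by fun_prop)
    simpa using integral_Ioi_of_hasDerivAt_of_tendsto hcont₀.continuousWithinAt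
      (hderiv ω ω.2) (hω.congr_fun (hcancel ω) measurableSet_Ioi) (hlim ω ω.2)
  calc _ = ∫ ω : sphere (0 : E) 1, (∫ r in Ioi (0 : ℝ), f' (r • ω.1)) ∂μ.toSphere := by
        rw [integral_eq_integral_toSphere_integral_Ioi hint]
        exact integral_congr_ae (.of_forall fun ω =>
          setIntegral_congr_fun measurableSet_Ioi (hcancel ω))
    _ = ∫ _, -f 0 ∂μ.toSphere := integral_congr_ae hray
    _ = _ := by rw [integral_const, smul_neg]

end PolarCoordinates

section IntegrationByParts

open Module

variable {E F G W : Type*} [NormedAddCommGroup E] [NormedSpace ℝ E] [FiniteDimensional ℝ E]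
  [MeasurableSpace E] [BorelSpace E] {μ : Measure E} [μ.IsAddHaarMeasure]
  [NormedAddCommGroup F] [NormedSpace ℝ F] [NormedAddCommGroup G] [NormedSpace ℝ G]
  [NormedAddCommGroup W] [NormedSpace ℝ W]

theorem addHaar_span_singleton (hE : 1 < finrank ℝ E) (v : E) : μ (Submodule.span ℝ {v}) = 0 := by
  refine Measure.addHaar_submodule μ _ fun htop => ?_
  have hle := finrank_span_le_card (R := ℝ) ({v} : Set E)
  rw [htop, finrank_top, Set.toFinset_singleton, Finset.card_singleton] at hle
  omega

/- `f` may be changed on the line through `0` in the direction `v`: this line is a null set, and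
every line parallel to `v` either coincides with it or misses it. -/
theorem integral_bilinear_hasLineDerivAt_right_eq_neg_left_of_ne_zero (hE : 1 < finrank ℝ E)
    {f f' : E → F} {g g' : E → G} {v : E} {B : F →L[ℝ] G →L[ℝ] W}
    (hf'g : Integrable (fun x => B (f' x) (g x)) μ) (hfg' : Integrable (fun x => B (f x) (g' x)) μ)
    (hfg : Integrable (fun x => B (f x) (g x)) μ)
    (hf : ∀ x ≠ 0, HasLineDerivAt ℝ f (f' x) x v) (hg : ∀ x, HasLineDerivAt ℝ g (g' x) x v) :
    ∫ x, B (f x) (g' x) ∂μ = -∫ x, B (f' x) (g x) ∂μ := by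
  set ℓ : Submodule ℝ E := Submodule.span ℝ {v}
  have hoff : ∀ᵐ x ∂μ, x ∈ (ℓ : Set E)ᶜ := compl_mem_ae_iff.2 (addHaar_span_singleton hE v)
  have hline : ∀ x (t : ℝ), x + t • v ∈ ℓ ↔ x ∈ ℓ := fun x t =>
    ℓ.add_mem_iff_left (ℓ.smul_mem t (Submodule.mem_span_singleton_self v))
  have hmod (x : E) :
      HasLineDerivAt ℝ ((ℓ : Set E)ᶜ.indicator f) ((ℓ : Set E)ᶜ.indicator f' x) x v := by
    by_cases hx : x ∈ ℓ
    · simpa [HasLineDerivAt, Set.indicator, hline, hx] using hasDerivAt_const (0 : ℝ) (0 : F)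
    · simpa [HasLineDerivAt, Set.indicator, hline, hx] using
        hf x (ne_of_mem_of_not_mem ℓ.zero_mem hx).symm
  have hB : ∀ (a : E → F) (b : E → G),
      (fun x => B (a x) (b x)) =ᵐ[μ] fun x => B ((ℓ : Set E)ᶜ.indicator a x) (b x) := fun a b => by
    filter_upwards [hoff] with x hx
    rw [Set.indicator_of_mem hx]
  rw [integral_congr_ae (hB f g'), integral_congr_ae (hB f' g)]
  exact integral_bilinear_hasLineDerivAt_right_eq_neg_left_of_integrable
    (hf'g.congr (hB f' g)) (hfg'.congr (hB f g')) (hfg.congr (hB f g))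
    (fun x _ => hmod x) (fun x _ => hg x)

end IntegrationByParts

section Radial

open Module

variable {E : Type*} [NormedAddCommGroup E] [InnerProductSpace ℝ E]

theorem hasLineDerivAt_norm {x : E} (hx : x ≠ 0) (v : E) :
    HasLineDerivAt ℝ (fun y : E => ‖y‖) (inner ℝ (‖x‖⁻¹ • x) v) x v := by
  have hline : HasDerivAt (fun t : ℝ => x + t • v) v 0 := by
    simpa using ((hasDerivAt_id (0 : ℝ)).smul_const v).const_add x
  have hsqrt := hline.norm_sq.sqrt (by simpa using hx)
  simp only [Real.sqrt_sq (norm_nonneg _), zero_smul, add_zero] at hsqrt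
  refine hsqrt.congr_deriv ?_
  rw [real_inner_smul_left, mul_div_mul_left _ _ two_ne_zero, div_eq_inv_mul]

theorem hasLineDerivAt_comp_norm {F : Type*} [NormedAddCommGroup F] [NormedSpace ℝ F]
    {k : ℝ → F} {k' : F} {x : E} (hx : x ≠ 0) (hk : HasDerivAt k k' ‖x‖) (v : E) :
    HasLineDerivAt ℝ (fun y : E => k ‖y‖) (inner ℝ (‖x‖⁻¹ • x) v • k') x v := by
  have hk₀ : HasDerivAt k k' ‖x + (0 : ℝ) • v‖ := by simpa only [zero_smul, add_zero] using hk
  exact hk₀.scomp 0 (hasLineDerivAt_norm hx v)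

variable [FiniteDimensional ℝ E] [MeasurableSpace E] [BorelSpace E] {μ : Measure E}
  {k k' : ℝ → ℂ} {φ : E → ℂ}

theorem integrable_mul_radial_fderiv {K : E → ℂ} (hK : Integrable K μ) (hφ : ContDiffBdd 1 φ) :
    Integrable (fun x => K x * fderiv ℝ φ x (‖x‖⁻¹ • x)) μ := by
  obtain ⟨C, hC⟩ := hφ.fderiv.exists_norm_le
  have hunit : Measurable fun x : E => ‖x‖⁻¹ • x := by fun_prop
  refine hK.mul_bdd (c := C) ?_ (.of_forall fun x => ?_)
  · exact isBoundedBilinearMap_apply.continuous.comp_aestronglyMeasurable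
      (hφ.fderiv.contDiff.continuous.aestronglyMeasurable.prodMk hunit.aestronglyMeasurable)
  · have hx : ‖‖x‖⁻¹ • x‖ ≤ 1 :=
      mem_closedBall_zero_iff.1 (inv_norm_smul_mem_unitClosedBall x)
    exact ((fderiv ℝ φ x).le_of_opNorm_le_of_le (hC x) hx).trans_eq (mul_one C)

theorem integrable_inner_inv_norm_smul {K : E → ℂ} (hK : Integrable K μ) (v : E) :
    Integrable (fun x => inner ℝ (‖x‖⁻¹ • x) v • K x) μ := by
  have hmeas : Measurable fun x : E => inner ℝ (‖x‖⁻¹ • x) v := by fun_prop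
  refine hK.bdd_smul ‖v‖ hmeas.aestronglyMeasurable (.of_forall fun x => ?_)
  exact (norm_inner_le_norm _ _).trans
    (mul_le_of_le_one_left (norm_nonneg v)
      (mem_closedBall_zero_iff.1 (inv_norm_smul_mem_unitClosedBall x)))

variable [μ.IsAddHaarMeasure]

theorem integral_radial_mul_fderiv_apply (hE : 1 < finrank ℝ E)
    (hk : ∀ r > 0, HasDerivAt k (k' r) r) (hki : Integrable (fun x : E => k ‖x‖) μ)
    (hk'i : Integrable (fun x : E => k' ‖x‖) μ) (hφ : ContDiffBdd 1 φ) (v : E) :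
    ∫ x, k ‖x‖ * fderiv ℝ φ x v ∂μ =
      -∫ x, (inner ℝ (‖x‖⁻¹ • x) v • k' ‖x‖) * φ x ∂μ := by
  have hk'v := integrable_inner_inv_norm_smul hk'i v
  exact integral_bilinear_hasLineDerivAt_right_eq_neg_left_of_ne_zero
    (B := ContinuousLinearMap.mul ℝ ℂ) hE
    (integrable_bilinear_of_contDiffBdd _ hk'v hφ)
    (integrable_bilinear_of_contDiffBdd _ hki (hφ.fderiv_apply v))
    (integrable_bilinear_of_contDiffBdd _ hki hφ)
    (fun x hx => hasLineDerivAt_comp_norm hx (hk _ (norm_pos_iff.2 hx)) v)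
    (fun x => (hφ.differentiable x).hasFDerivAt.hasLineDerivAt v)

theorem integral_radial_mul_sum_fderiv_fderiv {ι : Type*} [Fintype ι] (b : OrthonormalBasis ι ℝ E)
    (hE : 1 < finrank ℝ E) (hk : ∀ r > 0, HasDerivAt k (k' r) r)
    (hki : Integrable (fun x : E => k ‖x‖) μ) (hk'i : Integrable (fun x : E => k' ‖x‖) μ)
    (hφ : ContDiffBdd 2 φ) :
    ∫ x, k ‖x‖ * ∑ i, fderiv ℝ (fun y => fderiv ℝ φ y (b i)) x (b i) ∂μ =
      -∫ x, k' ‖x‖ * fderiv ℝ φ x (‖x‖⁻¹ • x) ∂μ := by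
  have hsplit : ∀ x, ∑ i, (inner ℝ (‖x‖⁻¹ • x) (b i) • k' ‖x‖) * fderiv ℝ φ x (b i) =
      k' ‖x‖ * fderiv ℝ φ x (‖x‖⁻¹ • x) := fun x => by
    conv_rhs => rw [← b.sum_repr' (‖x‖⁻¹ • x), map_sum, Finset.mul_sum]
    refine Finset.sum_congr rfl fun i _ => ?_
    rw [map_smul, real_inner_comm, smul_mul_assoc, mul_smul_comm]
  have hφi (i : ι) : ContDiffBdd 1 fun x => fderiv ℝ φ x (b i) := hφ.fderiv_apply (b i)
  have hleft (i : ι) :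
      Integrable (fun x => k ‖x‖ * fderiv ℝ (fun y => fderiv ℝ φ y (b i)) x (b i)) μ :=
    integrable_bilinear_of_contDiffBdd (.mul ℝ ℂ) hki ((hφi i).fderiv_apply (b i))
  have hright (i : ι) :
      Integrable (fun x => (inner ℝ (‖x‖⁻¹ • x) (b i) • k' ‖x‖) * fderiv ℝ φ x (b i)) μ :=
    integrable_bilinear_of_contDiffBdd (.mul ℝ ℂ) (integrable_inner_inv_norm_smul hk'i (b i))
      (hφi i)
  simp_rw [Finset.mul_sum, ← hsplit]
  rw [integral_finsetSum _ fun i _ => hleft i, integral_finsetSum _ fun i _ => hright i,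
    ← Finset.sum_neg_distrib]
  exact Finset.sum_congr rfl fun i _ =>
    integral_radial_mul_fderiv_apply hE hk hki hk'i (hφi i) (b i)

end Radial

section ExponentialDecay

variable {κ : ℂ}

theorem norm_ofReal_pow_mul_cexp_neg_mul (κ : ℂ) (n : ℕ) {r : ℝ} (hr : 0 ≤ r) :
    ‖(r : ℂ) ^ n * cexp (-κ * r)‖ = r ^ n * Real.exp (-κ.re * r) := by
  rw [norm_mul, norm_pow, norm_real, Real.norm_of_nonneg hr, norm_exp, re_mul_ofReal, neg_re]

theorem integrableOn_ofReal_pow_mul_cexp_neg_mul (hκ : 0 < κ.re) (n : ℕ) :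
    IntegrableOn (fun r : ℝ => (r : ℂ) ^ n * cexp (-κ * r)) (Set.Ioi 0) := by
  have hreal := integrableOn_rpow_mul_exp_neg_mul_rpow
    (s := n) (neg_one_lt_zero.trans_le n.cast_nonneg) one_pos hκ
  simp only [Real.rpow_natCast, Real.rpow_one] at hreal
  refine Integrable.mono' hreal (by fun_prop) (ae_restrict_of_forall_mem measurableSet_Ioi ?_)
  exact fun r hr => (norm_ofReal_pow_mul_cexp_neg_mul κ n (le_of_lt hr)).le

theorem tendsto_ofReal_pow_mul_cexp_neg_mul_atTop (hκ : 0 < κ.re) (n : ℕ) :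
    Tendsto (fun r : ℝ => (r : ℂ) ^ n * cexp (-κ * r)) atTop (𝓝 0) := by
  rw [tendsto_zero_iff_norm_tendsto_zero]
  refine (tendsto_rpow_mul_exp_neg_mul_atTop_nhds_zero n κ.re hκ).congr' ?_
  filter_upwards [eventually_ge_atTop 0] with r hr
  rw [norm_ofReal_pow_mul_cexp_neg_mul κ n hr, Real.rpow_natCast]

end ExponentialDecay

section YukawaKernel

open Module Set Metric

/-- The radial profile `e^{-κr}/(4πr)` of the Yukawa kernel, as a function of the distance `r`. -/
def yukawaKernel (κ : ℂ) (r : ℝ) : ℂ :=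
  cexp (-κ * r) / (4 * (π : ℂ) * r)

/-- The flux `-4πr² ∂ᵣ(e^{-κr}/(4πr)) = (1 + κr) e^{-κr}` of minus the gradient of the Yukawa
kernel through the sphere of radius `r` around the origin. -/
def yukawaFlux (κ : ℂ) (r : ℝ) : ℂ :=
  (1 + κ * r) * cexp (-κ * r)

variable {κ : ℂ} {r : ℝ} {φ : E3 → ℂ}

theorem hasDerivAt_cexp_neg_mul (κ : ℂ) (r : ℝ) :
    HasDerivAt (fun r : ℝ => cexp (-κ * r)) (-κ * cexp (-κ * r)) r := by
  simpa [mul_comm] using ((hasDerivAt_id r).ofReal_comp.const_mul (-κ)).cexp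

theorem hasDerivAt_yukawaKernel (κ : ℂ) (hr : r ≠ 0) :
    HasDerivAt (yukawaKernel κ) (-(yukawaFlux κ r / (4 * π * r ^ 2))) r := by
  have hr' : (r : ℂ) ≠ 0 := ofReal_ne_zero.2 hr
  have hπ : (π : ℂ) ≠ 0 := ofReal_ne_zero.2 Real.pi_ne_zero
  have hden : HasDerivAt (fun r : ℝ => 4 * (π : ℂ) * r) (4 * π) r := by
    simpa using (hasDerivAt_id r).ofReal_comp.const_mul (4 * (π : ℂ))
  refine ((hasDerivAt_cexp_neg_mul κ r).div hden (by simp [hr, hπ])).congr_deriv ?_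
  simp only [yukawaFlux]
  field_simp
  ring

theorem hasDerivAt_yukawaFlux (κ : ℂ) (hr : r ≠ 0) :
    HasDerivAt (yukawaFlux κ) (-(4 * π * r ^ 2 * (κ ^ 2 * yukawaKernel κ r))) r := by
  have hr' : (r : ℂ) ≠ 0 := ofReal_ne_zero.2 hr
  have hπ : (π : ℂ) ≠ 0 := ofReal_ne_zero.2 Real.pi_ne_zero
  have hlin : HasDerivAt (fun r : ℝ => 1 + κ * r) κ r := by
    simpa using ((hasDerivAt_id r).ofReal_comp.const_mul κ).const_add 1
  refine (hlin.mul (hasDerivAt_cexp_neg_mul κ r)).congr_deriv ?_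
  simp only [yukawaKernel]
  field_simp [hr']
  ring

theorem yukawaFlux_zero (κ : ℂ) : yukawaFlux κ 0 = 1 := by
  simp [yukawaFlux]

theorem continuous_yukawaFlux (κ : ℂ) : Continuous (yukawaFlux κ) := by
  unfold yukawaFlux
  fun_prop

theorem tendsto_yukawaFlux_atTop (hκ : 0 < κ.re) : Tendsto (yukawaFlux κ) atTop (𝓝 0) := by
  have hlim := (tendsto_ofReal_pow_mul_cexp_neg_mul_atTop hκ 0).add
    ((tendsto_ofReal_pow_mul_cexp_neg_mul_atTop hκ 1).const_mul κ)
  rw [mul_zero, add_zero] at hlim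
  refine hlim.congr fun r => ?_
  simp only [yukawaFlux]
  ring

theorem integrable_yukawaKernel_norm (hκ : 0 < κ.re) :
    Integrable fun x : E3 => yukawaKernel κ ‖x‖ := by
  rw [integrable_fun_norm_addHaar, finrank_euclideanSpace_fin]
  refine IntegrableOn.congr_fun ((integrableOn_ofReal_pow_mul_cexp_neg_mul hκ 1).const_mul
    (4 * (π : ℂ))⁻¹) (fun r hr => ?_) measurableSet_Ioi
  have hr' : (r : ℂ) ≠ 0 := ofReal_ne_zero.2 (ne_of_gt hr)
  simp only [yukawaKernel, real_smul]
  push_cast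
  field_simp

theorem integrable_yukawaFlux_norm_div_sq (hκ : 0 < κ.re) :
    Integrable fun x : E3 => yukawaFlux κ ‖x‖ / (4 * π * ‖x‖ ^ 2) := by
  refine (integrable_fun_norm_addHaar volume (f := fun r => yukawaFlux κ r / (4 * π * r ^ 2))).2 ?_
  rw [finrank_euclideanSpace_fin]
  refine IntegrableOn.congr_fun (((integrableOn_ofReal_pow_mul_cexp_neg_mul hκ 0).add
    ((integrableOn_ofReal_pow_mul_cexp_neg_mul hκ 1).const_mul κ)).const_mul
    (4 * (π : ℂ))⁻¹) (fun r hr => ?_) measurableSet_Ioi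
  have hr' : (r : ℂ) ≠ 0 := ofReal_ne_zero.2 (ne_of_gt hr)
  simp only [yukawaFlux, real_smul, Pi.add_apply]
  push_cast
  field_simp

theorem toSphere_volume_real_univ_E3 : (volume : Measure E3).toSphere.real univ = 4 * π := by
  rw [Measure.toSphere_real_apply_univ, finrank_euclideanSpace_fin, measureReal_def,
    EuclideanSpace.volume_ball_fin_three, ENNReal.ofReal_one, one_pow, one_mul,
    ENNReal.toReal_ofReal (by positivity)]
  ring

theorem e3_eq_basisFun (i : Fin 3) : e3 i = EuclideanSpace.basisFun (Fin 3) ℝ i :=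
  (EuclideanSpace.basisFun_apply (Fin 3) ℝ i).symm

theorem integral_yukawaKernel_mul_lapC (hκ : 0 < κ.re) (hφ : ContDiffBdd 2 φ) :
    ∫ x, yukawaKernel κ ‖x‖ * lapC φ x =
      ∫ x, yukawaFlux κ ‖x‖ / (4 * π * ‖x‖ ^ 2) * fderiv ℝ φ x (‖x‖⁻¹ • x) := by
  have hparts := integral_radial_mul_sum_fderiv_fderiv (EuclideanSpace.basisFun (Fin 3) ℝ)
    (by simp) (fun r hr => hasDerivAt_yukawaKernel κ (ne_of_gt hr))
    (integrable_yukawaKernel_norm hκ) (integrable_yukawaFlux_norm_div_sq hκ).neg hφ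
  simpa only [lapC, e3_eq_basisFun, neg_mul, integral_neg, neg_neg] using hparts

theorem hasDerivAt_yukawaFlux_mul_radial (hφ : Differentiable ℝ φ) {ω : E3} (hω : ‖ω‖ = 1)
    (hr : 0 < r) :
    HasDerivAt (fun s : ℝ => yukawaFlux κ ‖s • ω‖ * φ (s • ω))
      (yukawaFlux κ ‖r • ω‖ * fderiv ℝ φ (r • ω) (‖r • ω‖⁻¹ • r • ω) -
        4 * π * ‖r • ω‖ ^ 2 * (κ ^ 2 * yukawaKernel κ ‖r • ω‖ * φ (r • ω))) r := by
  have hnorm : ∀ s > 0, ‖s • ω‖ = s := fun s hs => by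
    rw [norm_smul, hω, mul_one, Real.norm_of_nonneg hs.le]
  have hray : HasDerivAt (fun s : ℝ => φ (s • ω)) (fderiv ℝ φ (r • ω) ω) r := by
    have hline : HasDerivAt (fun s : ℝ => s • ω) ω r := by
      simpa using (hasDerivAt_id r).smul_const ω
    exact (hφ (r • ω)).hasFDerivAt.comp_hasDerivAt r hline
  have hmul : HasDerivAt (fun s : ℝ => yukawaFlux κ ‖s • ω‖ * φ (s • ω)) _ r :=
    ((hasDerivAt_yukawaFlux κ hr.ne').mul hray).congr_of_eventuallyEq <| by
      filter_upwards [eventually_gt_nhds hr] with s hs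
      rw [hnorm s hs, Pi.mul_apply]
  refine hmul.congr_deriv ?_
  rw [hnorm r hr, inv_smul_smul₀ hr.ne']
  ring

theorem tendsto_yukawaFlux_mul_radial (hκ : 0 < κ.re) (hφ : ContDiffBdd 0 φ) {ω : E3}
    (hω : ‖ω‖ = 1) :
    Tendsto (fun s : ℝ => yukawaFlux κ ‖s • ω‖ * φ (s • ω)) atTop (𝓝 0) := by
  obtain ⟨C, hC⟩ := hφ.exists_norm_le
  have hnorm : Tendsto (fun s : ℝ => ‖s • ω‖) atTop atTop := by
    simpa only [norm_smul, hω, mul_one] using tendsto_norm_atTop_atTop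
  exact ((tendsto_yukawaFlux_atTop hκ).comp hnorm).zero_mul_isBoundedUnder_le
    (isBoundedUnder_of ⟨C, fun s => hC (s • ω)⟩)

theorem integrable_mul_lapC {K : E3 → ℂ} (hK : Integrable K) (hφ : ContDiffBdd 2 φ) :
    Integrable fun x => K x * lapC φ x := by
  simp only [lapC, Finset.mul_sum]
  exact integrable_finsetSum _ fun i _ => integrable_bilinear_of_contDiffBdd (.mul ℝ ℂ) hK
    (ContDiffBdd.fderiv_apply (n := 0) (hφ.fderiv_apply (e3 i)) (e3 i))

theorem integral_yukawaFlux_mul_radial_fderiv_sub (hκ : 0 < κ.re) (hφ : ContDiffBdd 1 φ) :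
    ∫ x, (yukawaFlux κ ‖x‖ / (4 * π * ‖x‖ ^ 2) * fderiv ℝ φ x (‖x‖⁻¹ • x) -
      κ ^ 2 * (yukawaKernel κ ‖x‖ * φ x)) = -φ 0 := by
  have hπ : (π : ℂ) ≠ 0 := ofReal_ne_zero.2 Real.pi_ne_zero
  set radialDeriv : E3 → ℂ := fun x => yukawaFlux κ ‖x‖ * fderiv ℝ φ x (‖x‖⁻¹ • x) -
    4 * π * ‖x‖ ^ 2 * (κ ^ 2 * yukawaKernel κ ‖x‖ * φ x)
  have hderiv : ∀ x, (‖x‖ ^ (finrank ℝ E3 - 1))⁻¹ • radialDeriv x = 4 * π *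
      (yukawaFlux κ ‖x‖ / (4 * π * ‖x‖ ^ 2) * fderiv ℝ φ x (‖x‖⁻¹ • x) -
        κ ^ 2 * (yukawaKernel κ ‖x‖ * φ x)) := fun x => by
    rw [finrank_euclideanSpace_fin, real_smul]
    rcases eq_or_ne x 0 with rfl | hx
    -- both sides vanish at the origin, by `a / 0 = 0`
    · simp [yukawaKernel]
    · have hx' : (‖x‖ : ℂ) ≠ 0 := ofReal_ne_zero.2 (norm_ne_zero_iff.2 hx)
      simp only [radialDeriv]
      push_cast
      field_simp
  have hint : Integrable fun x => (‖x‖ ^ (finrank ℝ E3 - 1))⁻¹ • radialDeriv x := by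
    simp only [hderiv]
    exact ((integrable_mul_radial_fderiv (integrable_yukawaFlux_norm_div_sq hκ) hφ).sub
      ((integrable_bilinear_of_contDiffBdd (.mul ℝ ℂ) (integrable_yukawaKernel_norm hκ)
        hφ).const_mul _)).const_mul _
  have hcont : Continuous fun x => yukawaFlux κ ‖x‖ * φ x :=
    ((continuous_yukawaFlux κ).comp continuous_norm).mul hφ.contDiff.continuous
  have hpolar := integral_inv_norm_pow_smul_radial_deriv hcont.continuousAt
    (fun ω hω r hr => hasDerivAt_yukawaFlux_mul_radial hφ.differentiable
      (mem_sphere_zero_iff_norm.1 hω) hr) hint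
    (fun ω hω => tendsto_yukawaFlux_mul_radial hκ (hφ.of_le zero_le_one)
      (mem_sphere_zero_iff_norm.1 hω))
  simp only [hderiv] at hpolar
  rw [integral_const_mul, toSphere_volume_real_univ_E3, norm_zero, yukawaFlux_zero, one_mul,
    real_smul, ← mul_neg] at hpolar
  push_cast at hpolar
  exact mul_left_cancel₀ (by simp [hπ]) hpolar

theorem integral_yukawaKernel_mul_helmholtz (hκ : 0 < κ.re) (hφ : ContDiffBdd 2 φ) :
    ∫ x, yukawaKernel κ ‖x‖ * (κ ^ 2 * φ x - lapC φ x) = φ 0 := by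
  have hφ₁ : ContDiffBdd 1 φ := hφ.of_le one_le_two
  have hK := integrable_yukawaKernel_norm hκ
  have hKφ : Integrable fun x => κ ^ 2 * (yukawaKernel κ ‖x‖ * φ x) :=
    (integrable_bilinear_of_contDiffBdd (.mul ℝ ℂ) hK hφ).const_mul _
  have hflux := integrable_mul_radial_fderiv (integrable_yukawaFlux_norm_div_sq hκ) hφ₁
  have hzero := integral_yukawaFlux_mul_radial_fderiv_sub hκ hφ₁
  rw [integral_sub hflux hKφ, ← integral_yukawaKernel_mul_lapC hκ hφ] at hzero
  simp only [mul_sub, mul_left_comm _ (κ ^ 2)]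
  rw [integral_sub hKφ (integrable_mul_lapC hK hφ), ← neg_sub, hzero, neg_neg]

end YukawaKernel

section YukawaPotential

variable {κ : ℂ} {f : E3 → ℂ}

theorem lapC_comp_const_sub (hf : ContDiff ℝ 2 f) (x w : E3) :
    lapC (fun w => f (x - w)) w = lapC f (x - w) := by
  have hf' (i : Fin 3) : Differentiable ℝ fun y => fderiv ℝ f y (e3 i) :=
    ((hf.fderiv_right (m := 1) (by norm_num)).differentiable one_ne_zero).clm_apply (by fun_prop)
  simp only [lapC, fderiv_comp_const_sub (hf.differentiable two_ne_zero),
    neg_apply, fderiv_fun_neg, fderiv_comp_const_sub (hf' _), neg_neg]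

theorem lapC_convolution {K : E3 → ℂ} (hK : Integrable K) (hf : ContDiffBdd 2 f) (x : E3) :
    lapC (K ⋆[.mul ℝ ℂ] f) x = (K ⋆[.mul ℝ ℂ] lapC f) x := by
  have hf' (i : Fin 3) : ContDiffBdd 1 fun y => fderiv ℝ f y (e3 i) := hf.fderiv_apply (e3 i)
  simp only [lapC, (hf.of_le one_le_two).fderiv_convolution_apply _ hK,
    (hf' _).fderiv_convolution_apply _ hK]
  simp only [convolution_def, lapC, map_sum]
  exact (integral_finsetSum _ fun i _ =>
    ((hf' i).fderiv_apply (n := 0) (e3 i)).convolutionExists (.mul ℝ ℂ) hK x).symm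

theorem yukawa_eq_convolution (κ : ℂ) (f : E3 → ℂ) :
    yukawa κ f = (fun x => yukawaKernel κ ‖x‖) ⋆[.mul ℝ ℂ] f := by
  ext x
  rw [convolution_eq_swap]
  rfl

theorem neg_lapC_yukawa_add (hκ : 0 < κ.re) (hf : ContDiffBdd 2 f) (x : E3) :
    -lapC (yukawa κ f) x + κ ^ 2 * yukawa κ f x = f x := by
  have hK := integrable_yukawaKernel_norm hκ
  have hfx := hf.comp_const_sub x
  have hpot : yukawa κ f x = ∫ w, yukawaKernel κ ‖w‖ * f (x - w) := by
    rw [yukawa_eq_convolution]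
    rfl
  have hlap : lapC (yukawa κ f) x = ∫ w, yukawaKernel κ ‖w‖ * lapC (fun w => f (x - w)) w := by
    simp only [yukawa_eq_convolution, lapC_convolution hK hf, lapC_comp_const_sub hf.contDiff]
    rfl
  have hKf : Integrable fun w => κ ^ 2 * (yukawaKernel κ ‖w‖ * f (x - w)) :=
    (hf.convolutionExists (.mul ℝ ℂ) hK x).const_mul _
  rw [hlap, hpot, neg_add_eq_sub, ← integral_const_mul, ← integral_sub hKf
    (integrable_mul_lapC hK hfx)]
  simp only [mul_left_comm (κ ^ 2), ← mul_sub]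
  rw [integral_yukawaKernel_mul_helmholtz hκ hfx, sub_zero]

theorem stmt12_general (κ : ℂ) (hκ : 0 < κ.re) (f : E3 → ℂ) (hf : ContDiffBdd 2 f) :
    (∀ x : E3, Integrable (fun y : E3 =>
        Complex.exp (-κ * (‖x - y‖ : ℝ)) / (4 * (π : ℂ) * (‖x - y‖ : ℝ)) * f y)) ∧
    ContDiff ℝ 2 (yukawa κ f) ∧
    (∀ x : E3, -lapC (yukawa κ f) x + κ ^ 2 * yukawa κ f x = f x) := by
  have hK := integrable_yukawaKernel_norm hκ
  refine ⟨fun x => ?_, ?_, neg_lapC_yukawa_add hκ hf⟩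
  · exact (hf.convolutionExists (.mul ℝ ℂ) hK x).integrable_swap
  · rw [yukawa_eq_convolution]
    exact hf.contDiff_convolution (.mul ℝ ℂ) hK

end YukawaPotential

/-- For `Re κ > 0` and Schwartz `f`, the Yukawa potential
`u = (e^{−κr}/(4πr)) * f` is well defined, is `C²`, and satisfies
`−Δu + κ²u = f` on all of `ℝ³`. -/
theorem stmt12 (κ : ℂ) (hκ : 0 < κ.re) (f : SchwartzMap E3 ℂ) :
    (∀ x : E3, Integrable (fun y : E3 =>
        Complex.exp (-κ * (‖x - y‖ : ℝ)) / (4 * (π : ℂ) * (‖x - y‖ : ℝ)) * f y)) ∧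
    ContDiff ℝ 2 (yukawa κ (⇑f)) ∧
    (∀ x : E3, -lapC (yukawa κ (⇑f)) x + κ ^ 2 * yukawa κ (⇑f) x = f x) := by
  exact stmt12_general κ hκ f (contDiffBdd_schwartzMap f 2)
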